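/- Let α₀ > 0, β₀ > 0 and λ > 0, and let (φ,ψ) ∈ H¹(ℝ)×H¹(ℝ) satisfy ∫_ℝ φ² ψ dx = λ and I(φ,ψ) = M_λ. Then φ and ψ decay exponentially at infinity: there exist constants δ > 0 and C > 0 such that |φ(x)| ≤ C e^{−δ|x|} and |ψ(x)| ≤ C e^{−δ|x|} for all x ∈ ℝ. -/

import Mathlib

open MeasureTheory Filter Topology

noncomputable section

/-- Membership in `H¹(ℝ)`: `f` is differentiable with `f` and `f'` square-integrable. -/
def InH1 (f : ℝ → ℝ) : Prop :=
  Differentiable ℝ f ∧ Integrable (fun x => f x ^ 2) ∧ Integrable (fun x => deriv f x ^ 2)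

/-- The functional `I(f,g) = ∫ (f'² + g'² + α₀ f² + β₀ g²)`. -/
def Ifun (α₀ β₀ : ℝ) (f g : ℝ → ℝ) : ℝ :=
  ∫ x : ℝ, (deriv f x ^ 2 + deriv g x ^ 2 + α₀ * f x ^ 2 + β₀ * g x ^ 2)

/-- The set of values `I(f,g)` over pairs in `H¹ × H¹` with `∫ f² g = lam`. -/
def IvalSet (α₀ β₀ lam : ℝ) : Set ℝ :=
  {m | ∃ f g : ℝ → ℝ, InH1 f ∧ InH1 g ∧ (∫ x : ℝ, f x ^ 2 * g x) = lam ∧ Ifun α₀ β₀ f g = m}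

/-- `M_lam`, the infimum of `I` subject to the constraint `∫ f² g = lam`. -/
def Mfun (α₀ β₀ lam : ℝ) : ℝ := sInf (IvalSet α₀ β₀ lam)

/-!
Minimality is scale free: as `I` is homogeneous of degree two and `J(f, g) = ∫ f² g` of degree
three, `M³ J(f, g)² ≤ λ² I(f, g)³` on all of `H¹ × H¹`, with equality at the minimizer.
Differentiating there gives the weak Euler–Lagrange system `-φ'' + α₀ φ = 2μψφ`,
`-ψ'' + β₀ ψ = μφ²`.

Each equation is then treated by Agmon's method. Testing `-f'' + a f = F` with `f η²`, where `η` is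
a bounded weight with `|η'| ≤ δ |η|`, bounds `∫ ((f η)'² + (a - δ²) (f η)²)` by `∫ F f η²`. For `φ`
the potential `2μψ` vanishes at infinity, so this integral is absorbed away from a compact set; for
`ψ` the source `μφ²` already decays like `exp (-2δ|x|)`. The embedding `H¹ ⊂ L^∞` makes the bound
pointwise, uniformly in `η`, and `η` is sent to `exp (± δ x)`.
-/

open scoped ZeroAtInfty

/-! ### The space `H¹(ℝ)` -/

lemma inH1_iff_memLp {f : ℝ → ℝ} :
    InH1 f ↔ Differentiable ℝ f ∧ MemLp f 2 ∧ MemLp (deriv f) 2 := by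
  refine and_congr_right fun hf => ?_
  rw [memLp_two_iff_integrable_sq hf.continuous.aestronglyMeasurable,
    memLp_two_iff_integrable_sq (aestronglyMeasurable_deriv f volume)]

/-- The bilinear form `∫ (f' u' + a f u)` on `H¹(ℝ)` of the operator `-d²/dx² + a`. -/
def h1Form (a : ℝ) (f u : ℝ → ℝ) : ℝ := ∫ x, (deriv f x * deriv u x + a * (f x * u x))

lemma h1Form_zero_right (a : ℝ) (f : ℝ → ℝ) : h1Form a f 0 = 0 := by
  simp [h1Form]

namespace InH1

variable {f g h : ℝ → ℝ}

lemma differentiable (hf : InH1 f) : Differentiable ℝ f := hf.1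

lemma continuous (hf : InH1 f) : Continuous f := hf.differentiable.continuous

lemma memLp (hf : InH1 f) : MemLp f 2 := (inH1_iff_memLp.1 hf).2.1

lemma memLp_deriv (hf : InH1 f) : MemLp (deriv f) 2 := (inH1_iff_memLp.1 hf).2.2

protected lemma zero : InH1 0 := by
  simp [InH1]

protected lemma add (hf : InH1 f) (hg : InH1 g) : InH1 (f + g) := by
  have hderiv : deriv (f + g) = deriv f + deriv g :=
    funext fun x => deriv_add (hf.differentiable x) (hg.differentiable x)
  exact inH1_iff_memLp.2 ⟨hf.differentiable.add hg.differentiable, hf.memLp.add hg.memLp,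
    hderiv ▸ hf.memLp_deriv.add hg.memLp_deriv⟩

protected lemma const_smul (hf : InH1 f) (c : ℝ) : InH1 (c • f) := by
  have hderiv : deriv (c • f) = c • deriv f :=
    funext fun x => deriv_const_smul c (hf.differentiable x)
  exact inH1_iff_memLp.2 ⟨hf.differentiable.const_smul c, hf.memLp.const_smul c,
    hderiv ▸ hf.memLp_deriv.const_smul c⟩

lemma mul_of_bounded (hf : InH1 f) (hg : Differentiable ℝ g) {B B' : ℝ} (hB : ∀ x, |g x| ≤ B)
    (hB' : ∀ x, |deriv g x| ≤ B') : InH1 (f * g) := by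
  have hderiv : deriv (f * g) = deriv f * g + f * deriv g :=
    funext fun x => deriv_mul (hf.differentiable x) (hg x)
  have hg_top : MemLp g ⊤ :=
    memLp_top_of_bound hg.continuous.aestronglyMeasurable B (ae_of_all _ hB)
  have hg'_top : MemLp (deriv g) ⊤ :=
    memLp_top_of_bound (aestronglyMeasurable_deriv g volume) B' (ae_of_all _ hB')
  exact inH1_iff_memLp.2 ⟨hf.differentiable.mul hg, hg_top.mul hf.memLp,
    hderiv ▸ (hg_top.mul hf.memLp_deriv).add (hg'_top.mul hf.memLp)⟩

lemma integrable_mul (hf : InH1 f) (hg : InH1 g) : Integrable fun x => f x * g x :=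
  hf.memLp.integrable_mul hg.memLp

lemma integrable_h1Form (hf : InH1 f) (hg : InH1 g) (a : ℝ) :
    Integrable fun x => deriv f x * deriv g x + a * (f x * g x) :=
  (hf.memLp_deriv.integrable_mul hg.memLp_deriv).add ((hf.integrable_mul hg).const_mul a)

lemma h1Form_sub (hf : InH1 f) (hg : InH1 g) (a b : ℝ) :
    h1Form (a - b) f g = h1Form a f g - b * ∫ x, f x * g x := by
  rw [h1Form, h1Form, ← integral_const_mul,
    ← integral_sub (hf.integrable_h1Form hg a) ((hf.integrable_mul hg).const_mul b)]
  congr with x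
  ring

lemma hasDerivAt_sq (hf : InH1 f) (x : ℝ) :
    HasDerivAt (fun x => f x ^ 2) (2 * (f x * deriv f x)) x := by
  simpa [mul_assoc] using (hf.differentiable x).hasDerivAt.fun_pow 2

lemma integrable_deriv_sq (hf : InH1 f) : Integrable fun x => 2 * (f x * deriv f x) :=
  (hf.memLp.integrable_mul hf.memLp_deriv).const_mul 2

lemma tendsto_sq_atBot (hf : InH1 f) : Tendsto (fun x => f x ^ 2) atBot (𝓝 0) :=
  tendsto_zero_of_hasDerivAt_of_integrableOn_Iic (a := 0) (fun x _ => hf.hasDerivAt_sq x)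
    hf.integrable_deriv_sq.integrableOn hf.memLp.integrable_sq.integrableOn

lemma tendsto_sq_atTop (hf : InH1 f) : Tendsto (fun x => f x ^ 2) atTop (𝓝 0) :=
  tendsto_zero_of_hasDerivAt_of_integrableOn_Ioi (a := 0) (fun x _ => hf.hasDerivAt_sq x)
    hf.integrable_deriv_sq.integrableOn hf.memLp.integrable_sq.integrableOn

lemma tendsto_cocompact (hf : InH1 f) : Tendsto f (cocompact ℝ) (𝓝 0) := by
  have hsq : Tendsto (fun x => f x ^ 2) (cocompact ℝ) (𝓝 0) := by
    rw [cocompact_eq_atBot_atTop]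
    exact hf.tendsto_sq_atBot.sup hf.tendsto_sq_atTop
  rw [tendsto_zero_iff_abs_tendsto_zero]
  simpa [Real.sqrt_sq_eq_abs, Function.comp_def] using hsq.sqrt

/-- The embedding of `H¹(ℝ)` into the continuous functions vanishing at infinity. -/
def toZeroAtInfty (hf : InH1 f) : C₀(ℝ, ℝ) := ⟨⟨f, hf.continuous⟩, hf.tendsto_cocompact⟩

lemma integrable_mul_mul (hf : InH1 f) (hg : InH1 g) (hh : InH1 h) :
    Integrable fun x => f x * g x * h x :=
  (hf.integrable_mul hg).mul_bdd hh.continuous.aestronglyMeasurable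
    (ae_of_all _ hh.toZeroAtInfty.toBCF.norm_coe_le_norm)

lemma sqrt_mul_sq_le_h1Form (hf : InH1 f) {a : ℝ} (ha : 0 ≤ a) (x : ℝ) :
    √a * f x ^ 2 ≤ h1Form a f f := by
  have hint := hf.integrable_h1Form hf a
  have young (y : ℝ) :
      √a * (2 * (f y * deriv f y)) ≤ deriv f y * deriv f y + a * (f y * f y) := by
    nlinarith [sq_nonneg (deriv f y - √a * f y), Real.sq_sqrt ha]
  calc √a * f x ^ 2
      = ∫ y in Set.Iic x, √a * (2 * (f y * deriv f y)) := by
        rw [integral_const_mul, integral_Iic_of_hasDerivAt_of_tendsto'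
          (fun y _ => hf.hasDerivAt_sq y) hf.integrable_deriv_sq.integrableOn hf.tendsto_sq_atBot,
          sub_zero]
    _ ≤ ∫ y in Set.Iic x, (deriv f y * deriv f y + a * (f y * f y)) :=
        setIntegral_mono (hf.integrable_deriv_sq.const_mul _).integrableOn hint.integrableOn young
    _ ≤ h1Form a f f :=
        setIntegral_le_integral hint <| ae_of_all _ fun y =>
          add_nonneg (mul_self_nonneg _) (mul_nonneg ha (mul_self_nonneg _))

end InH1

/-! ### Agmon weights -/

/-- The weights of Agmon's method: bounded functions which, like `exp (± δ x)`, have logarithmic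
derivative at most `δ` and are dominated by `exp (δ |x|)`. -/
structure IsAgmonWeight (δ : ℝ) (η : ℝ → ℝ) : Prop where
  differentiable : Differentiable ℝ η
  bounded : ∃ B, ∀ x, |η x| ≤ B
  abs_deriv_le : ∀ x, |deriv η x| ≤ δ * |η x|
  abs_le_exp : ∀ x, |η x| ≤ Real.exp (δ * |x|)

/-- The bounded regularisation `1 / (exp (-δ x) + ε)` of the weight `exp (δ x)`. -/
def regularizedExp (δ ε x : ℝ) : ℝ := (Real.exp (-δ * x) + ε)⁻¹

section regularizedExp

variable (δ : ℝ) {ε : ℝ} (x : ℝ)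

lemma regularizedExp_pos (hε : 0 < ε) : 0 < regularizedExp δ ε x := by
  unfold regularizedExp
  positivity

lemma hasDerivAt_regularizedExp (hε : 0 < ε) :
    HasDerivAt (regularizedExp δ ε)
      (δ * (Real.exp (-δ * x) * regularizedExp δ ε x) * regularizedExp δ ε x) x := by
  have hne : Real.exp (-δ * x) + ε ≠ 0 := by positivity
  have h := ((((hasDerivAt_id x).const_mul (-δ)).exp).add_const ε).inv hne
  refine HasDerivAt.congr_deriv (f := regularizedExp δ ε) h ?_
  simp only [regularizedExp, id]
  field_simp

lemma exp_mul_regularizedExp_le_one (hε : 0 < ε) :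
    Real.exp (-δ * x) * regularizedExp δ ε x ≤ 1 := by
  rw [regularizedExp, ← div_eq_mul_inv, div_le_one (by positivity)]
  linarith

lemma regularizedExp_le_exp (hε : 0 < ε) : regularizedExp δ ε x ≤ Real.exp (δ * x) := by
  have h := exp_mul_regularizedExp_le_one δ x hε
  rwa [neg_mul, Real.exp_neg, inv_mul_le_one₀ (Real.exp_pos _)] at h

lemma isAgmonWeight_regularizedExp (hε : 0 < ε) : IsAgmonWeight |δ| (regularizedExp δ ε) where
  differentiable x := (hasDerivAt_regularizedExp δ x hε).differentiableAt
  bounded := by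
    refine ⟨ε⁻¹, fun x => ?_⟩
    rw [abs_of_pos (regularizedExp_pos δ x hε)]
    exact inv_anti₀ hε (by linarith [Real.exp_pos (-δ * x)])
  abs_deriv_le x := by
    have hpos := regularizedExp_pos δ x hε
    rw [(hasDerivAt_regularizedExp δ x hε).deriv, abs_mul, abs_mul,
      abs_of_nonneg (mul_nonneg (Real.exp_pos _).le hpos.le)]
    exact mul_le_mul_of_nonneg_right
      (mul_le_of_le_one_right (abs_nonneg δ) (exp_mul_regularizedExp_le_one δ x hε)) (abs_nonneg _)
  abs_le_exp x := by
    rw [abs_of_pos (regularizedExp_pos δ x hε), ← abs_mul]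
    exact (regularizedExp_le_exp δ x hε).trans (Real.exp_le_exp.2 (le_abs_self _))

end regularizedExp

lemma IsAgmonWeight.memLp_mul {δ : ℝ} {η F : ℝ → ℝ} {p : ENNReal} (hη : IsAgmonWeight δ η)
    (hF : MemLp (fun x => F x * Real.exp (δ * |x|)) p) : MemLp (fun x => F x * η x) p := by
  have hratio : MemLp (fun x => Real.exp (-(δ * |x|)) * η x) ⊤ := by
    refine memLp_top_of_bound (Continuous.aestronglyMeasurable ?_) 1 (ae_of_all _ fun x => ?_)
    · exact Continuous.mul (by fun_prop) hη.differentiable.continuous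
    · rw [Real.norm_eq_abs, abs_mul, Real.abs_exp, Real.exp_neg, inv_mul_le_one₀ (Real.exp_pos _)]
      exact hη.abs_le_exp x
  convert hratio.mul (r := p) hF using 2 with x
  rw [Pi.mul_apply, mul_assoc, ← mul_assoc (Real.exp _), ← Real.exp_add, add_neg_cancel,
    Real.exp_zero, one_mul]

lemma abs_le_mul_exp_of_forall_agmonWeight {δ D : ℝ} (hδ : 0 ≤ δ) {f : ℝ → ℝ}
    (hD : ∀ η, IsAgmonWeight δ η → ∀ x, |f x * η x| ≤ D) (x : ℝ) :
    |f x| ≤ D * Real.exp (-δ * |x|) := by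
  have one_sided (s : ℝ) (hs : |s| = δ) : |f x| ≤ D * Real.exp (-s * x) := by
    have hregular (ε : ℝ) (hε : 0 < ε) : |f x| ≤ D * (Real.exp (-s * x) + ε) := by
      have h := hD _ (hs ▸ isAgmonWeight_regularizedExp s hε) x
      rwa [abs_mul, abs_of_pos (regularizedExp_pos s x hε), regularizedExp, ← div_eq_mul_inv,
        div_le_iff₀ (by positivity)] at h
    have hlim : Tendsto (fun ε => D * (Real.exp (-s * x) + ε)) (𝓝[>] 0)
        (𝓝 (D * (Real.exp (-s * x) + 0))) :=
      (Continuous.tendsto (by fun_prop) 0).mono_left nhdsWithin_le_nhds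
    rw [add_zero] at hlim
    exact ge_of_tendsto hlim (eventually_mem_nhdsWithin.mono hregular)
  rcases le_total 0 x with hx | hx
  · simpa [abs_of_nonneg hx] using one_sided δ (abs_of_nonneg hδ)
  · simpa [abs_of_nonpos hx] using one_sided (-δ) (by rw [abs_neg, abs_of_nonneg hδ])

/-! ### Agmon's estimate -/

namespace InH1

variable {f η : ℝ → ℝ} {a δ : ℝ}

lemma mul_agmonWeight (hf : InH1 f) (hη : IsAgmonWeight δ η) : InH1 (f * η) := by
  obtain ⟨B, hB⟩ := hη.bounded
  refine hf.mul_of_bounded hη.differentiable hB (B' := |δ| * B) fun x => ?_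
  calc |deriv η x| ≤ δ * |η x| := hη.abs_deriv_le x
    _ ≤ |δ| * B := mul_le_mul (le_abs_self δ) (hB x) (abs_nonneg _) (abs_nonneg δ)

lemma h1Form_mul_agmonWeight_le (hf : InH1 f) (hη : IsAgmonWeight δ η) :
    h1Form (a - δ ^ 2) (f * η) (f * η) ≤ h1Form a f (f * η * η) := by
  have hfη := hf.mul_agmonWeight hη
  refine integral_mono (hfη.integrable_h1Form hfη _)
    (hf.integrable_h1Form (hfη.mul_agmonWeight hη) a) fun x => ?_
  have hη' : deriv η x ^ 2 ≤ δ ^ 2 * η x ^ 2 := by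
    rw [← mul_pow, sq_le_sq, abs_mul]
    exact (hη.abs_deriv_le x).trans (mul_le_mul_of_nonneg_right (le_abs_self δ) (abs_nonneg _))
  simp only [deriv_mul (hfη.differentiable x) (hη.differentiable x),
    deriv_mul (hf.differentiable x) (hη.differentiable x), Pi.mul_apply]
  nlinarith [mul_le_mul_of_nonneg_left hη' (sq_nonneg (f x))]

lemma exists_abs_le_exp_of_h1Form_le (hf : InH1 f) (hδ : 0 ≤ δ) {κ C : ℝ} (hκ : κ < a - δ ^ 2)
    (hC : ∀ η, IsAgmonWeight δ η →
      h1Form a f (f * η * η) ≤ κ * (∫ x, (f * η) x * (f * η) x) + C) :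
    ∃ D > 0, ∀ x, |f x| ≤ D * Real.exp (-δ * |x|) := by
  set b := a - δ ^ 2 - κ
  have hb : 0 < b := sub_pos.2 hκ
  have hweighted (η : ℝ → ℝ) (hη : IsAgmonWeight δ η) (x : ℝ) :
      |f x * η x| ≤ √(C / √b) + 1 := by
    have hfη := hf.mul_agmonWeight hη
    have henergy : √b * (f x * η x) ^ 2 ≤ C :=
      calc √b * (f x * η x) ^ 2
          ≤ h1Form b (f * η) (f * η) := hfη.sqrt_mul_sq_le_h1Form hb.le x
        _ = h1Form (a - δ ^ 2) (f * η) (f * η) - κ * ∫ x, (f * η) x * (f * η) x :=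
            hfη.h1Form_sub hfη _ _
        _ ≤ h1Form a f (f * η * η) - κ * ∫ x, (f * η) x * (f * η) x :=
            sub_le_sub_right (hf.h1Form_mul_agmonWeight_le hη) _
        _ ≤ C := by linarith [hC η hη]
    rw [← le_div_iff₀' (Real.sqrt_pos.2 hb)] at henergy
    exact (Real.abs_le_sqrt henergy).trans (le_add_of_nonneg_right zero_le_one)
  exact ⟨_, by positivity, abs_le_mul_exp_of_forall_agmonWeight hδ hweighted⟩

end InH1

/-- `f ∈ H¹(ℝ)` is a weak solution of `-f'' + a f = F`, tested against all of `H¹(ℝ)`. -/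
structure IsWeakSolution (a : ℝ) (f F : ℝ → ℝ) : Prop where
  inH1 : InH1 f
  h1Form_eq : ∀ u, InH1 u → h1Form a f u = ∫ x, F x * u x

lemma exists_mul_le_mul_add {X : Type*} [TopologicalSpace X] (V : C₀(X, ℝ)) {w : X → ℝ}
    (hw : Continuous w) {κ : ℝ} (hκ : 0 < κ) :
    ∃ C, ∀ x t, 0 ≤ t → t ≤ w x → V x * t ≤ κ * t + C := by
  obtain ⟨K, hK, hVK⟩ := (hasBasis_cocompact.eventually_iff).1
    ((zero_at_infty V).eventually (gt_mem_nhds hκ))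
  obtain ⟨C, hC⟩ := hK.exists_bound_of_continuousOn (V.continuous.mul hw).continuousOn
  refine ⟨|C|, fun x t ht htw => ?_⟩
  by_cases hx : x ∈ K
  · calc V x * t ≤ |V x| * |w x| := by
          gcongr
          exacts [le_abs_self _, htw.trans (le_abs_self _)]
      _ ≤ |C| := (abs_mul (V x) (w x)).symm.trans_le ((hC x hx).trans (le_abs_self C))
      _ ≤ κ * t + |C| := le_add_of_nonneg_left (by positivity)
  · have := mul_le_mul_of_nonneg_right (hVK hx).le ht
    linarith [abs_nonneg C]

namespace IsWeakSolution

variable {a δ : ℝ} {f : ℝ → ℝ}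

theorem exists_abs_le_exp_of_potential {V : C₀(ℝ, ℝ)}
    (hf : IsWeakSolution a f fun x => V x * f x) (hδ : 0 ≤ δ) (hδa : δ ^ 2 < a) :
    ∃ D > 0, ∀ x, |f x| ≤ D * Real.exp (-δ * |x|) := by
  obtain ⟨κ, hκ, hκa⟩ := exists_between (sub_pos.2 hδa)
  obtain ⟨C, hC⟩ := exists_mul_le_mul_add V
    (w := fun x => Real.exp (δ * |x|) ^ 2) (by fun_prop) hκ
  refine hf.inH1.exists_abs_le_exp_of_h1Form_le hδ hκa (C := C * ∫ x, f x * f x)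
    fun η hη => ?_
  have hfη := hf.inH1.mul_agmonWeight hη
  have hsq := hfη.integrable_mul hfη
  have hpotential : Integrable fun x => V x * ((f * η) x * (f * η) x) :=
    hsq.bdd_mul V.continuous.aestronglyMeasurable (ae_of_all _ V.toBCF.norm_coe_le_norm)
  have hmass := hf.inH1.integrable_mul hf.inH1
  calc h1Form a f (f * η * η)
      = ∫ x, V x * f x * (f * η * η) x := hf.h1Form_eq _ (hfη.mul_agmonWeight hη)
    _ = ∫ x, V x * ((f * η) x * (f * η) x) := by congr with x; simp only [Pi.mul_apply]; ring
    _ ≤ ∫ x, (κ * ((f * η) x * (f * η) x) + C * (f x * f x)) := by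
        refine integral_mono hpotential ((hsq.const_mul κ).add (hmass.const_mul C)) fun x => ?_
        have hηsq : η x ^ 2 ≤ Real.exp (δ * |x|) ^ 2 :=
          sq_le_sq.2 ((hη.abs_le_exp x).trans (le_abs_self _))
        have := mul_le_mul_of_nonneg_left (hC x _ (sq_nonneg (η x)) hηsq) (sq_nonneg (f x))
        simp only [Pi.mul_apply]
        linarith
    _ = κ * (∫ x, (f * η) x * (f * η) x) + C * ∫ x, f x * f x := by
        rw [integral_add (hsq.const_mul κ) (hmass.const_mul C), integral_const_mul,
          integral_const_mul]

theorem exists_abs_le_exp_of_source {F : ℝ → ℝ} (hf : IsWeakSolution a f F) (hδ : 0 ≤ δ)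
    (hδa : δ ^ 2 < a) (hF : MemLp (fun x => F x * Real.exp (δ * |x|)) 2) :
    ∃ D > 0, ∀ x, |f x| ≤ D * Real.exp (-δ * |x|) := by
  obtain ⟨κ, hκ, hκa⟩ := exists_between (sub_pos.2 hδa)
  refine hf.inH1.exists_abs_le_exp_of_h1Form_le hδ hκa
    (C := (4 * κ)⁻¹ * ∫ x, (F x * Real.exp (δ * |x|)) ^ 2) fun η hη => ?_
  have hfη := hf.inH1.mul_agmonWeight hη
  have hsq := hfη.integrable_mul hfη
  have hFη : MemLp (fun x => F x * η x) 2 := hη.memLp_mul hF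
  have young (x : ℝ) : F x * η x * (f * η) x
      ≤ κ * ((f * η) x * (f * η) x) + (4 * κ)⁻¹ * (F x * Real.exp (δ * |x|)) ^ 2 :=
    calc F x * η x * (f * η) x
        ≤ κ * ((f * η) x * (f * η) x) + (4 * κ)⁻¹ * (F x * η x) ^ 2 := by
          have := two_mul_le_add_mul_sq (a := (f * η) x) (b := F x * η x)
            (show 0 < 2 * κ by positivity)
          rw [show (4 * κ)⁻¹ = (2 * κ)⁻¹ / 2 by field_simp; norm_num]
          linarith
      _ ≤ κ * ((f * η) x * (f * η) x) + (4 * κ)⁻¹ * (F x * Real.exp (δ * |x|)) ^ 2 := by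
          rw [mul_pow, mul_pow, ← sq_abs (η x)]
          gcongr
          exact hη.abs_le_exp x
  calc h1Form a f (f * η * η)
      = ∫ x, F x * (f * η * η) x := hf.h1Form_eq _ (hfη.mul_agmonWeight hη)
    _ = ∫ x, F x * η x * (f * η) x := by congr with x; simp only [Pi.mul_apply]; ring
    _ ≤ ∫ x, (κ * ((f * η) x * (f * η) x)
          + (4 * κ)⁻¹ * (F x * Real.exp (δ * |x|)) ^ 2) :=
        integral_mono (hFη.integrable_mul hfη.memLp)
          ((hsq.const_mul κ).add (hF.integrable_sq.const_mul _)) young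
    _ = κ * (∫ x, (f * η) x * (f * η) x)
          + (4 * κ)⁻¹ * ∫ x, (F x * Real.exp (δ * |x|)) ^ 2 := by
        rw [integral_add (hsq.const_mul κ) (hF.integrable_sq.const_mul _), integral_const_mul,
          integral_const_mul]

end IsWeakSolution

/-! ### The Euler–Lagrange system -/

/-- The constraint functional `J(f, g) = ∫ f² g`. -/
def Jfun (f g : ℝ → ℝ) : ℝ := ∫ x, f x ^ 2 * g x

lemma Jfun_smul_smul (c : ℝ) (f g : ℝ → ℝ) : Jfun (c • f) (c • g) = c ^ 3 * Jfun f g := by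
  rw [Jfun, Jfun, ← integral_const_mul]
  congr with x
  simp only [Pi.smul_apply, smul_eq_mul]
  ring

lemma Ifun_smul_smul (α₀ β₀ c : ℝ) (f g : ℝ → ℝ) :
    Ifun α₀ β₀ (c • f) (c • g) = c ^ 2 * Ifun α₀ β₀ f g := by
  rw [Ifun, Ifun, ← integral_const_mul]
  congr with x
  simp only [deriv_const_smul_field, Pi.smul_apply, smul_eq_mul]
  ring

section EulerLagrange

variable {α₀ β₀ : ℝ} {f g φ ψ u v : ℝ → ℝ}

lemma Ifun_eq_h1Form_add_h1Form (hf : InH1 f) (hg : InH1 g) :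
    Ifun α₀ β₀ f g = h1Form α₀ f f + h1Form β₀ g g := by
  rw [h1Form, h1Form, ← integral_add (hf.integrable_h1Form hf _) (hg.integrable_h1Form hg _), Ifun]
  congr with x
  ring

lemma Ifun_nonneg (hα : 0 ≤ α₀) (hβ : 0 ≤ β₀) (f g : ℝ → ℝ) : 0 ≤ Ifun α₀ β₀ f g :=
  integral_nonneg fun x => by positivity

lemma eq_zero_of_Ifun_le_zero (hα : 0 < α₀) (hβ : 0 < β₀) (hf : InH1 f) (hg : InH1 g)
    (hI : Ifun α₀ β₀ f g ≤ 0) : f = 0 ∧ g = 0 := by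
  rw [Ifun_eq_h1Form_add_h1Form hf hg] at hI
  have hbound (x : ℝ) : √α₀ * f x ^ 2 + √β₀ * g x ^ 2 ≤ 0 :=
    (add_le_add (hf.sqrt_mul_sq_le_h1Form hα.le x) (hg.sqrt_mul_sq_le_h1Form hβ.le x)).trans hI
  have hα' := Real.sqrt_pos.2 hα
  have hβ' := Real.sqrt_pos.2 hβ
  constructor <;> ext x <;> refine pow_eq_zero_iff two_ne_zero |>.1 (le_antisymm ?_ (sq_nonneg _))
  · nlinarith [hbound x, mul_nonneg hβ'.le (sq_nonneg (g x))]
  · nlinarith [hbound x, mul_nonneg hα'.le (sq_nonneg (f x))]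

lemma Mfun_nonneg (hα : 0 ≤ α₀) (hβ : 0 ≤ β₀) (lam : ℝ) : 0 ≤ Mfun α₀ β₀ lam := by
  refine Real.sInf_nonneg ?_
  rintro _ ⟨f, g, -, -, -, rfl⟩
  exact Ifun_nonneg hα hβ f g

lemma Mfun_Jfun_le_Ifun (hα : 0 ≤ α₀) (hβ : 0 ≤ β₀) (hf : InH1 f) (hg : InH1 g) :
    Mfun α₀ β₀ (Jfun f g) ≤ Ifun α₀ β₀ f g := by
  refine csInf_le ⟨0, ?_⟩ ⟨f, g, hf, hg, rfl, rfl⟩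
  rintro _ ⟨f, g, -, -, -, rfl⟩
  exact Ifun_nonneg hα hβ f g

lemma odd_pow_surjective {n : ℕ} (hn : Odd n) : Function.Surjective fun x : ℝ => x ^ n := by
  have htop : Tendsto (fun x : ℝ => x ^ n) atTop atTop := tendsto_pow_atTop hn.pos.ne'
  refine (continuous_pow n).surjective htop ?_
  simpa [Function.comp_def, hn.neg_pow] using
    tendsto_neg_atTop_atBot.comp (htop.comp tendsto_neg_atBot_atTop)

/-- The cubes avoid the exponent `2 / 3` in the scaling of `Mfun`. -/
lemma Mfun_pow_three_mul_sq_le (hα : 0 ≤ α₀) (hβ : 0 ≤ β₀) (lam : ℝ) (hf : InH1 f) (hg : InH1 g) :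
    Mfun α₀ β₀ lam ^ 3 * Jfun f g ^ 2 ≤ lam ^ 2 * Ifun α₀ β₀ f g ^ 3 := by
  have hI := Ifun_nonneg hα hβ f g
  by_cases hJ : Jfun f g = 0
  · rw [hJ, zero_pow two_ne_zero, mul_zero]
    positivity
  obtain ⟨c, hc⟩ : ∃ c : ℝ, c ^ 3 = lam / Jfun f g := odd_pow_surjective (by decide) _
  have hscaled : c ^ 3 * Jfun f g = lam := by rw [hc, div_mul_cancel₀ _ hJ]
  have hM : Mfun α₀ β₀ lam ≤ c ^ 2 * Ifun α₀ β₀ f g := by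
    rw [← hscaled, ← Jfun_smul_smul, ← Ifun_smul_smul]
    exact Mfun_Jfun_le_Ifun hα hβ (hf.const_smul c) (hg.const_smul c)
  calc Mfun α₀ β₀ lam ^ 3 * Jfun f g ^ 2
      ≤ (c ^ 2 * Ifun α₀ β₀ f g) ^ 3 * Jfun f g ^ 2 := by
        have := Mfun_nonneg hα hβ lam
        gcongr
    _ = (c ^ 3 * Jfun f g) ^ 2 * Ifun α₀ β₀ f g ^ 3 := by ring
    _ = lam ^ 2 * Ifun α₀ β₀ f g ^ 3 := by rw [hscaled]

lemma hasDerivAt_h1Form_add_smul (hf : InH1 f) (hu : InH1 u) (a : ℝ) :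
    HasDerivAt (fun t : ℝ => h1Form a (f + t • u) (f + t • u)) (2 * h1Form a f u) 0 := by
  have hexpand : (fun t : ℝ => h1Form a (f + t • u) (f + t • u)) =
      fun t => h1Form a f f + t * (2 * h1Form a f u) + t ^ 2 * h1Form a u u := by
    funext t
    have hff := hf.integrable_h1Form hf a
    have hfu := ((hf.integrable_h1Form hu a).const_mul 2).const_mul t
    have huu := (hu.integrable_h1Form hu a).const_mul (t ^ 2)
    simp only [h1Form, ← integral_const_mul]
    rw [← integral_add hff hfu, ← integral_add (hff.fun_add hfu) huu]
    congr with x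
    simp only [deriv_add (hf.differentiable x) ((hu.const_smul t).differentiable x),
      deriv_const_smul_field, Pi.add_apply, Pi.smul_apply, smul_eq_mul]
    ring
  rw [hexpand]
  simpa using (((hasDerivAt_id' (0 : ℝ)).mul_const (2 * h1Form a f u)).const_add
    (h1Form a f f)).fun_add (((hasDerivAt_id' (0 : ℝ)).fun_pow 2).mul_const (h1Form a u u))

lemma hasDerivAt_Ifun_add_smul (hφ : InH1 φ) (hψ : InH1 ψ) (hu : InH1 u) (hv : InH1 v) :
    HasDerivAt (fun t : ℝ => Ifun α₀ β₀ (φ + t • u) (ψ + t • v))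
      (2 * (h1Form α₀ φ u + h1Form β₀ ψ v)) 0 := by
  simp only [Ifun_eq_h1Form_add_h1Form (hφ.add (hu.const_smul _)) (hψ.add (hv.const_smul _)),
    mul_add]
  exact (hasDerivAt_h1Form_add_smul hφ hu α₀).add (hasDerivAt_h1Form_add_smul hψ hv β₀)

/-- The derivative at `(f, g)` of `Jfun` in the direction `(u, v)`. -/
def JfunDeriv (f g u v : ℝ → ℝ) : ℝ := ∫ x, (2 * (f x * g x * u x) + f x * f x * v x)

lemma hasDerivAt_Jfun_add_smul (hφ : InH1 φ) (hψ : InH1 ψ) (hu : InH1 u) (hv : InH1 v) :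
    HasDerivAt (fun t : ℝ => Jfun (φ + t • u) (ψ + t • v)) (JfunDeriv φ ψ u v) 0 := by
  set d := ∫ x, (u x * u x * ψ x + 2 * (φ x * u x * v x)) with hd
  set e := ∫ x, u x * u x * v x with he
  have hexpand : (fun t : ℝ => Jfun (φ + t • u) (ψ + t • v)) =
      fun t => Jfun φ ψ + t * JfunDeriv φ ψ u v + t ^ 2 * d + t ^ 3 * e := by
    funext t
    have h₀ : Integrable fun x => φ x ^ 2 * ψ x := by
      simpa only [sq] using hφ.integrable_mul_mul hφ hψ
    have h₁ := (((hφ.integrable_mul_mul hψ hu).const_mul 2).fun_add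
      (hφ.integrable_mul_mul hφ hv)).const_mul t
    have h₂ := ((hu.integrable_mul_mul hu hψ).fun_add
      ((hφ.integrable_mul_mul hu hv).const_mul 2)).const_mul (t ^ 2)
    have h₃ := (hu.integrable_mul_mul hu hv).const_mul (t ^ 3)
    simp only [Jfun, JfunDeriv, hd, he, ← integral_const_mul]
    rw [← integral_add h₀ h₁, ← integral_add (h₀.fun_add h₁) h₂,
      ← integral_add ((h₀.fun_add h₁).fun_add h₂) h₃]
    congr with x
    simp only [Pi.add_apply, Pi.smul_apply, smul_eq_mul]
    ring
  rw [hexpand]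
  have hid := hasDerivAt_id' (0 : ℝ)
  simpa using (((hid.mul_const (JfunDeriv φ ψ u v)).const_add (Jfun φ ψ)).fun_add
    ((hid.fun_pow 2).mul_const d)).fun_add ((hid.fun_pow 3).mul_const e)

lemma Ifun_eq_zero_of_Jfun_eq_zero (hα : 0 ≤ α₀) (hβ : 0 ≤ β₀)
    (hmin : Ifun α₀ β₀ φ ψ = Mfun α₀ β₀ (Jfun φ ψ)) (hJ : Jfun φ ψ = 0) :
    Ifun α₀ β₀ φ ψ = 0 := by
  refine le_antisymm ?_ (Ifun_nonneg hα hβ φ ψ)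
  calc Ifun α₀ β₀ φ ψ = Mfun α₀ β₀ (Jfun 0 0) := by rw [hmin, hJ]; simp [Jfun]
    _ ≤ Ifun α₀ β₀ 0 0 := Mfun_Jfun_le_Ifun hα hβ .zero .zero
    _ = 0 := by simp [Ifun]

/-- The Euler–Lagrange equation of the scale-invariant inequality `Mfun_pow_three_mul_sq_le`. -/
lemma three_mul_Jfun_mul_h1Form_eq (hα : 0 ≤ α₀) (hβ : 0 ≤ β₀) (hφ : InH1 φ) (hψ : InH1 ψ)
    (hmin : Ifun α₀ β₀ φ ψ = Mfun α₀ β₀ (Jfun φ ψ)) (hI : Ifun α₀ β₀ φ ψ ≠ 0)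
    (hu : InH1 u) (hv : InH1 v) :
    3 * Jfun φ ψ * (h1Form α₀ φ u + h1Form β₀ ψ v) = Ifun α₀ β₀ φ ψ * JfunDeriv φ ψ u v := by
  have hJ : Jfun φ ψ ≠ 0 := mt (Ifun_eq_zero_of_Jfun_eq_zero hα hβ hmin) hI
  set I₀ := Ifun α₀ β₀ φ ψ
  set J₀ := Jfun φ ψ
  let gap (t : ℝ) : ℝ := J₀ ^ 2 * Ifun α₀ β₀ (φ + t • u) (ψ + t • v) ^ 3
    - I₀ ^ 3 * Jfun (φ + t • u) (ψ + t • v) ^ 2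
  have hgap_zero : gap 0 = 0 := by
    simp only [gap, zero_smul, add_zero]
    ring
  have hgap_nonneg (t : ℝ) : 0 ≤ gap t := sub_nonneg.2 <| hmin ▸
    Mfun_pow_three_mul_sq_le hα hβ J₀ (hφ.add (hu.const_smul t)) (hψ.add (hv.const_smul t))
  have hderiv : HasDerivAt gap (J₀ ^ 2 * (3 * I₀ ^ 2 * (2 * (h1Form α₀ φ u + h1Form β₀ ψ v)))
      - I₀ ^ 3 * (2 * J₀ * JfunDeriv φ ψ u v)) 0 := by
    simpa using (((hasDerivAt_Ifun_add_smul hφ hψ hu hv).fun_pow 3).const_mul (J₀ ^ 2)).fun_sub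
      (((hasDerivAt_Jfun_add_smul hφ hψ hu hv).fun_pow 2).const_mul (I₀ ^ 3))
  have hcritical := IsLocalMin.hasDerivAt_eq_zero
    (Eventually.of_forall fun t => hgap_zero.trans_le (hgap_nonneg t)) hderiv
  have hne : 2 * J₀ * I₀ ^ 2 ≠ 0 := by positivity
  apply mul_left_cancel₀ hne
  linear_combination hcritical

lemma exists_isWeakSolution (hα : 0 < α₀) (hβ : 0 < β₀) (hφ : InH1 φ) (hψ : InH1 ψ)
    (hmin : Ifun α₀ β₀ φ ψ = Mfun α₀ β₀ (Jfun φ ψ)) :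
    ∃ μ : ℝ, IsWeakSolution α₀ φ (fun x => 2 * μ * ψ x * φ x) ∧
      IsWeakSolution β₀ ψ (fun x => μ * φ x ^ 2) := by
  rcases eq_or_ne (Ifun α₀ β₀ φ ψ) 0 with hI | hI
  · obtain ⟨rfl, rfl⟩ := eq_zero_of_Ifun_le_zero hα hβ hφ hψ hI.le
    exact ⟨0, ⟨hφ, fun u _ => by simp [h1Form]⟩, ⟨hψ, fun v _ => by simp [h1Form]⟩⟩
  have hJ : Jfun φ ψ ≠ 0 := mt (Ifun_eq_zero_of_Jfun_eq_zero hα.le hβ.le hmin) hI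
  have euler_lagrange {u v : ℝ → ℝ} (hu : InH1 u) (hv : InH1 v) :
      h1Form α₀ φ u + h1Form β₀ ψ v =
        Ifun α₀ β₀ φ ψ / (3 * Jfun φ ψ) * JfunDeriv φ ψ u v := by
    rw [div_mul_eq_mul_div, eq_div_iff (by positivity), mul_comm]
    exact three_mul_Jfun_mul_h1Form_eq hα.le hβ.le hφ hψ hmin hI hu hv
  refine ⟨Ifun α₀ β₀ φ ψ / (3 * Jfun φ ψ), ⟨hφ, fun u hu => ?_⟩, ⟨hψ, fun v hv => ?_⟩⟩
  · have h := euler_lagrange hu .zero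
    rw [h1Form_zero_right, add_zero, JfunDeriv, ← integral_const_mul] at h
    rw [h]
    congr with x
    simp only [Pi.zero_apply]
    ring
  · have h := euler_lagrange .zero hv
    rw [h1Form_zero_right, zero_add, JfunDeriv, ← integral_const_mul] at h
    rw [h]
    congr with x
    simp only [Pi.zero_apply]
    ring

end EulerLagrange

/-! ### Decay of minimizers -/

lemma InH1.memLp_sq_mul_exp {f : ℝ → ℝ} (hf : InH1 f) {D δ : ℝ}
    (hD : ∀ x, |f x| ≤ D * Real.exp (-δ * |x|)) :
    MemLp (fun x => f x ^ 2 * Real.exp (δ * |x|)) 2 := by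
  have hbdd : MemLp (fun x => f x * Real.exp (δ * |x|)) ⊤ := by
    refine memLp_top_of_bound (Continuous.aestronglyMeasurable ?_) D (ae_of_all _ fun x => ?_)
    · exact hf.continuous.mul (by fun_prop)
    · have := hD x
      rwa [neg_mul, Real.exp_neg, ← div_eq_mul_inv, le_div_iff₀ (Real.exp_pos _),
        ← Real.abs_exp, ← abs_mul] at this
  convert hbdd.mul (r := 2) hf.memLp using 2 with x
  rw [Pi.mul_apply, sq, mul_assoc]

theorem minimizer_exponential_decay_general {α₀ β₀ lam δ : ℝ} (hδ : 0 ≤ δ) (hδα : δ ^ 2 < α₀)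
    (hδβ : δ ^ 2 < β₀) {φ ψ : ℝ → ℝ} (hφ : InH1 φ) (hψ : InH1 ψ)
    (hconstr : ∫ x, φ x ^ 2 * ψ x = lam) (hmin : Ifun α₀ β₀ φ ψ = Mfun α₀ β₀ lam) :
    ∃ C > 0, ∀ x, |φ x| ≤ C * Real.exp (-δ * |x|) ∧ |ψ x| ≤ C * Real.exp (-δ * |x|) := by
  subst hconstr
  obtain ⟨μ, hφ_eq, hψ_eq⟩ := exists_isWeakSolution ((sq_nonneg δ).trans_lt hδα)
    ((sq_nonneg δ).trans_lt hδβ) hφ hψ hmin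
  obtain ⟨D, hD, hφ_le⟩ := IsWeakSolution.exists_abs_le_exp_of_potential
    (V := (2 * μ) • hψ.toZeroAtInfty) hφ_eq hδ hδα
  have hsource : MemLp (fun x => μ * φ x ^ 2 * Real.exp (δ * |x|)) 2 := by
    simpa only [mul_assoc] using (hφ.memLp_sq_mul_exp hφ_le).const_mul μ
  obtain ⟨E, -, hψ_le⟩ := hψ_eq.exists_abs_le_exp_of_source hδ hδβ hsource
  refine ⟨max D E, lt_max_of_lt_left hD, fun x => ⟨(hφ_le x).trans ?_, (hψ_le x).trans ?_⟩⟩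
  · gcongr
    exact le_max_left D E
  · gcongr
    exact le_max_right D E

/-- any minimizer `(φ, ψ)` decays exponentially at infinity. -/
theorem minimizer_exponential_decay (α₀ β₀ lam : ℝ)
    (hα : 0 < α₀) (hβ : 0 < β₀) (hlam : 0 < lam)
    (φ ψ : ℝ → ℝ) (hφ : InH1 φ) (hψ : InH1 ψ)
    (hconstr : (∫ x : ℝ, φ x ^ 2 * ψ x) = lam)
    (hmin : Ifun α₀ β₀ φ ψ = Mfun α₀ β₀ lam) :
    ∃ δ > (0 : ℝ), ∃ C > (0 : ℝ), ∀ x : ℝ,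
      |φ x| ≤ C * Real.exp (-δ * |x|) ∧ |ψ x| ≤ C * Real.exp (-δ * |x|) := by
  obtain ⟨δ, hδ, hδ_lt⟩ := exists_between (Real.sqrt_pos.2 (lt_min hα hβ))
  obtain ⟨hδα, hδβ⟩ := lt_min_iff.1 ((Real.lt_sqrt hδ.le).1 hδ_lt)
  exact ⟨δ, hδ, minimizer_exponential_decay_general hδ.le hδα hδβ hφ hψ hconstr hmin⟩
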